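/- arXiv:2402.13854 — 2 statements merged into one kernel-verified Lean document; each statement's English description precedes it below -/
import Mathlib

section
/- Let Q ∈ ℂ^{n×n} and define F[Q] : (ℂ^n)^4 → ℂ by F[Q](z₁,z₂,z₃,z₄) = ⟨Q z₁, z₂⟩⟨Q z₃, z₄⟩ + ⟨Q z₃, z₂⟩⟨Q z₁, z₄⟩, where ⟨·,·⟩ is the standard Hermitian inner product on ℂ^n. Then for two matrices Q₁, Q₂ ∈ ℂ^{n×n}, F[Q₁] = F[Q₂] (as functions of all four arguments) if and only if Q₁ = Q₂ or Q₁ = -Q₂. -/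
open scoped ComplexConjugate

/-- The standard Hermitian inner product on `ℂⁿ`, conjugate-linear in the first argument. -/
noncomputable def hermInner {n : ℕ} (z w : Fin n → ℂ) : ℂ := ∑ i, conj (z i) * w i

/-- `F[Q](z₁,z₂,z₃,z₄) = ⟨Q z₁, z₂⟩⟨Q z₃, z₄⟩ + ⟨Q z₃, z₂⟩⟨Q z₁, z₄⟩`. -/
noncomputable def Fform {n : ℕ} (Q : Matrix (Fin n) (Fin n) ℂ)
    (z₁ z₂ z₃ z₄ : Fin n → ℂ) : ℂ :=
  hermInner (Q.mulVec z₁) z₂ * hermInner (Q.mulVec z₃) z₄ +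
    hermInner (Q.mulVec z₃) z₂ * hermInner (Q.mulVec z₁) z₄

/-!
On the diagonal `z₃ = z₁`, `z₄ = z₂` the form `F[Q]` is `2 ⟨Q z₁, z₂⟩²`, so equality of `F[Q₁]` and
`F[Q₂]` makes the product of the sesquilinear forms of `Q₁ - Q₂` and `Q₁ + Q₂` vanish identically.
A group is not the union of two proper subgroups; applied in one variable and then in the other,
this shows that one of the two factors is zero.
-/

section SesquilinearMaps

variable {R R₁ R₂ M N P₁ P₂ : Type*} [AddCommGroup M]

lemma linearMap_eq_zero_or_eq_zero_of_forall [Ring R₁] [Semiring R₂] [Module R₁ M]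
    [AddCommMonoid P₁] [Module R₂ P₁] [AddCommMonoid P₂] [Module R₂ P₂] {σ : R₁ →+* R₂}
    {f : M →ₛₗ[σ] P₁} {g : M →ₛₗ[σ] P₂} (h : ∀ x, f x = 0 ∨ g x = 0) :
    f = 0 ∨ g = 0 := by
  have cover : ((⊤ : Submodule R₁ M) : Set M) ⊆ f.ker ∪ g.ker := fun x _ => h x
  simpa only [top_le_iff, LinearMap.ker_eq_top] using AddSubgroupClass.subset_union.mp cover

variable [AddCommGroup N] [Ring R₁] [Ring R₂] [Module R₁ M] [Module R₂ N]

lemma sesquilinear_eq_zero_or_eq_zero_of_mul_eq_zero [CommSemiring R] [NoZeroDivisors R]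
    {σ₁ : R₁ →+* R} {σ₂ : R₂ →+* R} {B C : M →ₛₗ[σ₁] N →ₛₗ[σ₂] R}
    (h : ∀ x y, B x y * C x y = 0) : B = 0 ∨ C = 0 :=
  linearMap_eq_zero_or_eq_zero_of_forall fun x =>
    linearMap_eq_zero_or_eq_zero_of_forall fun y => mul_eq_zero.mp (h x y)

variable [CommRing R] [NoZeroDivisors R] {σ₁ : R₁ →+* R} {σ₂ : R₂ →+* R}

lemma sesquilinear_eq_or_eq_neg_of_sq_eq_sq {B C : M →ₛₗ[σ₁] N →ₛₗ[σ₂] R}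
    (h : ∀ x y, B x y ^ 2 = C x y ^ 2) : B = C ∨ B = -C := by
  have product_zero : ∀ x y, (B - C) x y * (B - -C) x y = 0 := fun x y => by
    simp only [LinearMap.sub_apply, LinearMap.neg_apply]
    linear_combination h x y
  exact (sesquilinear_eq_zero_or_eq_zero_of_mul_eq_zero product_zero).imp
    sub_eq_zero.mp sub_eq_zero.mp

theorem stmt_0_general [NeZero (2 : R)] (B C : M →ₛₗ[σ₁] N →ₛₗ[σ₂] R) :
    (∀ x₁ y₁ x₂ y₂, B x₁ y₁ * B x₂ y₂ + B x₂ y₁ * B x₁ y₂ =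
      C x₁ y₁ * C x₂ y₂ + C x₂ y₁ * C x₁ y₂) ↔ B = C ∨ B = -C := by
  constructor
  · intro h
    refine sesquilinear_eq_or_eq_neg_of_sq_eq_sq fun x y => mul_left_cancel₀ (two_ne_zero' R) ?_
    linear_combination h x y x y
  · rintro (rfl | rfl) x₁ y₁ x₂ y₂
    · rfl
    · simp only [LinearMap.neg_apply, neg_mul_neg]

end SesquilinearMaps

open Matrix in
lemma hermInner_mulVec_eq_toLinearMapₛₗ₂' {n : ℕ} (Q : Matrix (Fin n) (Fin n) ℂ) (z w : Fin n → ℂ) :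
    hermInner (Q *ᵥ z) w =
      toLinearMapₛₗ₂' ℂ (starRingEnd ℂ) (RingHom.id ℂ) Qᴴ z w := by
  simp only [hermInner, mulVec, dotProduct, toLinearMapₛₗ₂'_apply, map_sum, map_mul,
    Finset.sum_mul, smul_eq_mul, RingHom.id_apply, conjTranspose_apply]
  rw [Finset.sum_comm]
  refine Finset.sum_congr rfl fun j _ => Finset.sum_congr rfl fun i _ => ?_
  rw [starRingEnd_apply]
  ring

theorem stmt_0 {n : ℕ} (Q₁ Q₂ : Matrix (Fin n) (Fin n) ℂ) :
    (∀ z₁ z₂ z₃ z₄ : Fin n → ℂ, Fform Q₁ z₁ z₂ z₃ z₄ = Fform Q₂ z₁ z₂ z₃ z₄) ↔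
      (Q₁ = Q₂ ∨ Q₁ = -Q₂) := by
  simp only [Fform, hermInner_mulVec_eq_toLinearMapₛₗ₂', stmt_0_general, ← map_neg,
    ← Matrix.conjTranspose_neg, EmbeddingLike.apply_eq_iff_eq, Matrix.conjTranspose_inj]
end

section
/- Let B be a real positive-definite m×m matrix and Q = ⟨BD, D⟩ the associated second-order operator on ℝ^m. Let ℋ^k_ℂ denote the space of complex-coefficient homogeneous polynomials of degree k on ℝ^m. Then the map (p, q) ↦ Q^k(conj(p)·q), which takes constant values since Q^k is a constant-coefficient operator of order 2k applied to a homogeneous polynomial of degree 2k, defines a (positive-definite Hermitian) inner product on ℋ^k_ℂ. In particular Q^k(|p|²) ≥ 0 with equality if and only if p = 0. -/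
open Matrix

/-- The second-order constant-coefficient operator `Q = ⟨BD, D⟩ = Σ_{i,j} B_{ij} ∂_i ∂_j`. -/
noncomputable def QB {m : ℕ} (B : Matrix (Fin m) (Fin m) ℝ) (f : (Fin m → ℝ) → ℂ) :
    (Fin m → ℝ) → ℂ :=
  fun x => ∑ i, ∑ j,
    B i j • fderiv ℝ (fun y => fderiv ℝ f y (Pi.single j 1)) x (Pi.single i 1)

/-- Evaluation of a complex-coefficient polynomial at a real point. -/
noncomputable def evalR {m : ℕ} (p : MvPolynomial (Fin m) ℂ) : (Fin m → ℝ) → ℂ :=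
  fun x => MvPolynomial.eval (fun i => (x i : ℂ)) p

/-- The sesquilinear form `(p, q) ↦ Q^k(conj(p)·q)` (evaluated at `0`). -/
noncomputable def Bform {m : ℕ} (B : Matrix (Fin m) (Fin m) ℝ) (k : ℕ)
    (p q : MvPolynomial (Fin m) ℂ) : ℂ :=
  (QB B)^[k] (fun x => (starRingEnd ℂ) (evalR p x) * evalR q x) 0

/-!
Let `w(x) = exp(-⟨B⁻¹x, x⟩/2)`, the Gaussian weight with covariance `B`. Integration by parts gives
`∫ x_j f w = ∫ (Σ_i B_{ij} ∂_i f) w`, so Euler's identity turns into `n ∫ f w = ∫ (Q f) w` for `f`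
homogeneous of degree `n`. Iterating from degree `2k` down to the constant `Q^k f` yields
`(2k)‼ ∫ f w = Q^k f · ∫ w`; for `f = conj(p) q`, this makes `Q^k(conj(p) q)` a positive multiple of
the inner product of `p` and `q` in `L²(w)`.
-/

open MvPolynomial MeasureTheory
open scoped ComplexConjugate ComplexOrder Nat

section QuadDiffOp

variable {σ K R : Type*} [Fintype σ] [CommSemiring K] [CommSemiring R] [Algebra K R]

/-- The constant-coefficient operator `Σ_{i,j} B_{ij} ∂_i ∂_j` on polynomials. The scalars of `B`
are kept apart from the coefficients `R`, so that a real matrix acts on complex polynomials. -/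
noncomputable def quadDiffOp (B : Matrix σ σ K) : Module.End R (MvPolynomial σ R) :=
  ∑ i, ∑ j, B i j • ((pderiv i).toLinearMap ∘ₗ (pderiv j).toLinearMap)

theorem quadDiffOp_apply (B : Matrix σ σ K) (p : MvPolynomial σ R) :
    quadDiffOp B p = ∑ i, ∑ j, B i j • pderiv i (pderiv j p) := by
  simp [quadDiffOp]

theorem isHomogeneous_quadDiffOp (B : Matrix σ σ K) {n : ℕ} {p : MvPolynomial σ R}
    (hp : p.IsHomogeneous n) : (quadDiffOp B p).IsHomogeneous (n - 2) := by
  rw [quadDiffOp_apply]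
  refine .sum _ _ _ fun i _ => .sum _ _ _ fun j _ => ?_
  rw [← algebraMap_smul R, smul_eq_C_mul]
  exact hp.pderiv.pderiv.C_mul _

theorem isHomogeneous_quadDiffOp_pow (B : Matrix σ σ K) (k : ℕ) {n : ℕ} {p : MvPolynomial σ R}
    (hp : p.IsHomogeneous n) : ((quadDiffOp B ^ k) p).IsHomogeneous (n - 2 * k) := by
  induction k generalizing p n with
  | zero => simpa using hp
  | succ k ih =>
    rw [pow_succ, Module.End.mul_apply, show n - 2 * (k + 1) = n - 2 - 2 * k by omega]
    exact ih (isHomogeneous_quadDiffOp B hp)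

variable {N : Type*} [AddCommMonoid N]

theorem nsmul_eq_map_quadDiffOp (B : Matrix σ σ K) (L : MvPolynomial σ R →+ N)
    (hL : ∀ j p, L (X j * p) = L (∑ i, B i j • pderiv i p)) {n : ℕ} {p : MvPolynomial σ R}
    (hp : p.IsHomogeneous n) : n • L p = L (quadDiffOp B p) := calc
  n • L p = ∑ j, L (X j * pderiv j p) := by rw [← map_nsmul, ← hp.sum_X_mul_pderiv, map_sum]
  _ = ∑ j, ∑ i, L (B i j • pderiv i (pderiv j p)) := by simp only [hL, map_sum]
  _ = L (quadDiffOp B p) := by rw [Finset.sum_comm]; simp only [quadDiffOp_apply, map_sum]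

theorem doubleFactorial_nsmul_eq_map_quadDiffOp_pow (B : Matrix σ σ K) (L : MvPolynomial σ R →+ N)
    (hL : ∀ j p, L (X j * p) = L (∑ i, B i j • pderiv i p)) {k : ℕ} {p : MvPolynomial σ R}
    (hp : p.IsHomogeneous (2 * k)) : (2 * k)‼ • L p = L ((quadDiffOp B ^ k) p) := by
  induction k generalizing p with
  | zero => simp
  | succ k ih =>
    rw [pow_succ, Module.End.mul_apply, ← ih (isHomogeneous_quadDiffOp B hp),
      ← nsmul_eq_map_quadDiffOp B L hL hp, mul_add_one, Nat.doubleFactorial_add_two, mul_comm,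
      mul_nsmul']

end QuadDiffOp

theorem hasFDerivAt_eval_mvPolynomial {𝕜 E A σ : Type*} [NontriviallyNormedField 𝕜]
    [NormedAddCommGroup E] [NormedSpace 𝕜 E] [NormedCommRing A] [NormedAlgebra 𝕜 A] [Fintype σ]
    {g : E → σ → A} {g' : σ → E →L[𝕜] A} {x : E} (hg : ∀ i, HasFDerivAt (g · i) (g' i) x)
    (p : MvPolynomial σ A) :
    HasFDerivAt (fun y => eval (g y) p) (∑ i, eval (g x) (pderiv i p) • g' i) x := by
  classical
  induction p using MvPolynomial.induction_on with
  | C a =>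
    simp only [eval_C]
    exact (hasFDerivAt_const a x).congr_fderiv (by ext; simp)
  | add p q hp hq =>
    simp only [map_add]
    exact (hp.add hq).congr_fderiv (by ext; simp [add_mul, Finset.sum_add_distrib])
  | mul_X p n hp =>
    simp only [map_mul, eval_X]
    refine (hp.mul (hg n)).congr_fderiv ?_
    ext
    simp [pderiv_X, Pi.single_apply, apply_ite, add_mul, Finset.sum_add_distrib, mul_assoc,
      Finset.mul_sum]

section Evaluation

variable {m : ℕ} {p : MvPolynomial (Fin m) ℂ}

theorem evalR_C (c : ℂ) (x : Fin m → ℝ) : evalR (C c) x = c :=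
  eval_C c

theorem evalR_X (i : Fin m) (x : Fin m → ℝ) : evalR (X i) x = x i :=
  eval_X i

theorem evalR_add (p q : MvPolynomial (Fin m) ℂ) (x : Fin m → ℝ) :
    evalR (p + q) x = evalR p x + evalR q x :=
  map_add _ p q

theorem evalR_mul (p q : MvPolynomial (Fin m) ℂ) (x : Fin m → ℝ) :
    evalR (p * q) x = evalR p x * evalR q x :=
  map_mul _ p q

theorem evalR_real_smul (r : ℝ) (p : MvPolynomial (Fin m) ℂ) (x : Fin m → ℝ) :
    evalR (r • p) x = r • evalR p x := by
  simp only [evalR, ← aeval_eq_eval]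
  exact LinearMap.map_smul_of_tower (aeval fun i => (x i : ℂ)).toLinearMap r p

theorem evalR_sum {ι : Type*} (s : Finset ι) (p : ι → MvPolynomial (Fin m) ℂ) (x : Fin m → ℝ) :
    evalR (∑ i ∈ s, p i) x = ∑ i ∈ s, evalR (p i) x :=
  map_sum _ p s

theorem evalR_map_conj (p : MvPolynomial (Fin m) ℂ) (x : Fin m → ℝ) :
    evalR (MvPolynomial.map (starRingEnd ℂ) p) x = conj (evalR p x) := by
  have conj_point : conj ∘ (fun i => (x i : ℂ)) = fun i => (x i : ℂ) :=
    funext fun i => Complex.conj_ofReal (x i)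
  rw [evalR, evalR, eval_map, ← eval₂_id, eval₂_comp_left, RingHom.comp_id, conj_point]

theorem continuous_evalR (p : MvPolynomial (Fin m) ℂ) : Continuous (evalR p) :=
  p.continuous_eval.comp (by fun_prop)

theorem exists_evalR_ne_zero (hp : p ≠ 0) : ∃ x, evalR p x ≠ 0 := by
  contrapose! hp
  refine funext_set (fun _ => Set.range ((↑) : ℝ → ℂ))
    (fun _ => Set.infinite_range_of_injective Complex.ofReal_injective) fun z hz => ?_
  choose x hx using fun i => hz i trivial
  simpa [evalR, hx] using hp x

theorem hasFDerivAt_evalR (p : MvPolynomial (Fin m) ℂ) (x : Fin m → ℝ) :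
    HasFDerivAt (evalR p) (∑ i, evalR (pderiv i p) x •
      (Complex.ofRealCLM ∘L (ContinuousLinearMap.proj i : (Fin m → ℝ) →L[ℝ] ℝ))) x := by
  have hg (i : Fin m) : HasFDerivAt (fun y : Fin m → ℝ => (y i : ℂ))
      (Complex.ofRealCLM ∘L (ContinuousLinearMap.proj i : (Fin m → ℝ) →L[ℝ] ℝ)) x :=
    (Complex.ofRealCLM ∘L (ContinuousLinearMap.proj i : (Fin m → ℝ) →L[ℝ] ℝ)).hasFDerivAt
  exact hasFDerivAt_eval_mvPolynomial hg p

theorem fderiv_evalR_apply (p : MvPolynomial (Fin m) ℂ) (x v : Fin m → ℝ) :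
    fderiv ℝ (evalR p) x v = evalR (∑ i, v i • pderiv i p) x := by
  simp [(hasFDerivAt_evalR p x).fderiv, evalR_sum, evalR_real_smul, mul_comm]

theorem QB_evalR (B : Matrix (Fin m) (Fin m) ℝ) (p : MvPolynomial (Fin m) ℂ) :
    QB B (evalR p) = evalR (quadDiffOp B p) := by
  have fderiv_single (q : MvPolynomial (Fin m) ℂ) (i : Fin m) (x : Fin m → ℝ) :
      fderiv ℝ (evalR q) x (Pi.single i 1) = evalR (pderiv i q) x := by
    simp [fderiv_evalR_apply, Pi.single_apply]
  ext x
  simp only [QB, fderiv_single, quadDiffOp_apply, evalR_sum, evalR_real_smul]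

theorem iterate_QB_evalR (B : Matrix (Fin m) (Fin m) ℝ) (k : ℕ) (p : MvPolynomial (Fin m) ℂ) :
    (QB B)^[k] (evalR p) = evalR ((quadDiffOp B ^ k) p) := by
  rw [Module.End.pow_apply]
  exact (Function.Semiconj.iterate_right (fun q => (QB_evalR B q).symm) k p).symm

theorem QB_conj (B : Matrix (Fin m) (Fin m) ℝ) (f : (Fin m → ℝ) → ℂ) :
    QB B (fun x => conj (f x)) = fun x => conj (QB B f x) := by
  ext x
  simp only [QB, starRingEnd_apply, fderiv_star, ContinuousLinearMap.comp_apply,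
    ContinuousLinearEquiv.coe_coe, starL'_apply, star_sum, star_smul, star_trivial]

end Evaluation

section GaussianWeight

variable {ι : Type*} [Fintype ι] {B : Matrix ι ι ℝ}

theorem exists_pos_mul_dotProduct_self_le_of_posDef (hB : B.PosDef) :
    ∃ c > 0, ∀ x : ι → ℝ, c * (x ⬝ᵥ x) ≤ x ⬝ᵥ B *ᵥ x := by
  classical
  cases isEmpty_or_nonempty ι
  · exact ⟨1, one_pos, fun x => by simp⟩
  open scoped MatrixOrder in
  obtain ⟨c, hc, hcB⟩ := (CFC.exists_pos_algebraMap_le_iff hB.isHermitian.isSelfAdjoint).2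
    fun r hr => hB.isStrictlyPositive.spectrum_pos hr
  refine ⟨c, hc, fun x => ?_⟩
  have := (Matrix.le_iff.1 hcB).dotProduct_mulVec_nonneg x
  simpa [Matrix.sub_mulVec, Algebra.algebraMap_eq_smul_one, Matrix.smul_mulVec] using this

variable [DecidableEq ι]

/-- The unnormalized density `exp(-⟨B⁻¹x, x⟩/2)` of the centred Gaussian with covariance matrix
`B`. -/
noncomputable def gaussianWeight (B : Matrix ι ι ℝ) (x : ι → ℝ) : ℝ :=
  Real.exp (-(x ⬝ᵥ B⁻¹ *ᵥ x) / 2)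

theorem gaussianWeight_pos (B : Matrix ι ι ℝ) (x : ι → ℝ) : 0 < gaussianWeight B x :=
  Real.exp_pos _

theorem differentiable_gaussianWeight (B : Matrix ι ι ℝ) : Differentiable ℝ (gaussianWeight B) := by
  unfold gaussianWeight dotProduct Matrix.mulVec dotProduct
  fun_prop

theorem fderiv_gaussianWeight_col (hB : B.IsSymm) (hBu : IsUnit B) (x : ι → ℝ) (j : ι) :
    fderiv ℝ (gaussianWeight B) x (B.col j) = -(x j * gaussianWeight B x) := by
  have inv_mulVec_col : B⁻¹ *ᵥ B.col j = Pi.single j 1 := by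
    rw [← Matrix.mulVec_single_one, Matrix.mulVec_mulVec,
      Matrix.nonsing_inv_mul _ ((Matrix.isUnit_iff_isUnit_det B).1 hBu), Matrix.one_mulVec]
  have col_dotProduct_inv_mulVec : B.col j ⬝ᵥ B⁻¹ *ᵥ x = x j := by
    rw [Matrix.dotProduct_mulVec, ← Matrix.mulVec_transpose, Matrix.transpose_nonsing_inv, hB.eq,
      inv_mulVec_col, single_one_dotProduct]
  have weight_line (t : ℝ) : gaussianWeight B (x + t • B.col j) =
      Real.exp (-(x ⬝ᵥ B⁻¹ *ᵥ x + t * (2 * x j) + t ^ 2 * B j j) / 2) := by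
    simp only [gaussianWeight, Matrix.mulVec_add, Matrix.mulVec_smul, inv_mulVec_col,
      dotProduct_add, add_dotProduct, dotProduct_smul, smul_dotProduct, col_dotProduct_inv_mulVec,
      dotProduct_single_one, smul_eq_mul, Pi.add_apply, Pi.smul_apply, Matrix.col_apply]
    ring_nf
  rw [← (differentiable_gaussianWeight B x).lineDeriv_eq_fderiv, lineDeriv, funext weight_line]
  have exponent_deriv : HasDerivAt
      (fun t : ℝ => -(x ⬝ᵥ B⁻¹ *ᵥ x + t * (2 * x j) + t ^ 2 * B j j) / 2) (-x j) 0 := by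
    refine (((((hasDerivAt_id' (0 : ℝ)).mul_const (2 * x j)).const_add (x ⬝ᵥ B⁻¹ *ᵥ x)).add
      ((hasDerivAt_pow 2 (0 : ℝ)).mul_const (B j j))).neg.div_const 2).congr_deriv ?_
    simp only [one_mul, Nat.cast_ofNat]
    ring
  rw [exponent_deriv.exp.deriv]
  simp [gaussianWeight, mul_comm]

theorem exists_gaussianWeight_le (hB : B.PosDef) :
    ∃ c > 0, ∀ x : ι → ℝ, gaussianWeight B x ≤ ∏ i, Real.exp (-c * x i ^ 2) := by
  obtain ⟨c, hc, hcB⟩ := exists_pos_mul_dotProduct_self_le_of_posDef hB.inv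
  refine ⟨c / 2, half_pos hc, fun x => ?_⟩
  have quadratic_le : c * ∑ i, x i ^ 2 ≤ x ⬝ᵥ B⁻¹ *ᵥ x := by
    simpa only [dotProduct, ← sq] using hcB x
  rw [← Real.exp_sum, ← Finset.mul_sum, gaussianWeight, Real.exp_le_exp]
  linarith

end GaussianWeight

theorem integrable_prod_pow_mul_exp_neg_mul_sq {ι : Type*} [Fintype ι] {c : ℝ} (hc : 0 < c)
    (d : ι → ℕ) :
    Integrable fun x : ι → ℝ => ∏ i, x i ^ d i * Real.exp (-c * x i ^ 2) := by
  refine Integrable.fintype_prod (f := fun i t => t ^ d i * Real.exp (-c * t ^ 2)) fun i => ?_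
  have hd : (-1 : ℝ) < d i := neg_one_lt_zero.trans_le (d i).cast_nonneg
  simpa using integrable_rpow_mul_exp_neg_mul_sq hc hd

section GaussianIntegral

variable {m : ℕ} {B : Matrix (Fin m) (Fin m) ℝ}

theorem integrable_gaussianWeight_smul_evalR (hB : B.PosDef) (p : MvPolynomial (Fin m) ℂ) :
    Integrable fun x => gaussianWeight B x • evalR p x := by
  induction p using MvPolynomial.induction_on' with
  | add p q hp hq =>
    exact (hp.add hq).congr (.of_forall fun x => by simp only [evalR_add, smul_add, Pi.add_apply])
  | monomial d a =>
    obtain ⟨c, hc, weight_le⟩ := exists_gaussianWeight_le hB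
    refine ((integrable_prod_pow_mul_exp_neg_mul_sq hc d).norm.const_mul ‖a‖).mono'
      ((differentiable_gaussianWeight B).continuous.smul
        (continuous_evalR _)).aestronglyMeasurable (.of_forall fun x => ?_)
    calc ‖gaussianWeight B x • evalR (monomial d a) x‖
        = ‖a‖ * (∏ i, |x i| ^ d i) * gaussianWeight B x := by
          rw [norm_smul, Real.norm_of_nonneg (gaussianWeight_pos B x).le, mul_comm]
          simp [evalR, eval_monomial, Finsupp.prod_fintype]
      _ ≤ ‖a‖ * (∏ i, |x i| ^ d i) * ∏ i, Real.exp (-c * x i ^ 2) := by gcongr; exact weight_le x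
      _ = ‖a‖ * ‖∏ i, x i ^ d i * Real.exp (-c * x i ^ 2)‖ := by
          simp [Finset.prod_mul_distrib, mul_assoc]

/-- The integral `∫ p(x) exp(-⟨B⁻¹x, x⟩/2) dx` as an additive functional of the polynomial `p`. -/
noncomputable def gaussianIntegral (hB : B.PosDef) : MvPolynomial (Fin m) ℂ →+ ℂ :=
  AddMonoidHom.mk' (fun p => ∫ x, gaussianWeight B x • evalR p x) fun p q => by
    rw [← integral_add (integrable_gaussianWeight_smul_evalR hB p)
      (integrable_gaussianWeight_smul_evalR hB q)]
    simp only [evalR_add, smul_add]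

theorem gaussianIntegral_apply (hB : B.PosDef) (p : MvPolynomial (Fin m) ℂ) :
    gaussianIntegral hB p = ∫ x, gaussianWeight B x • evalR p x :=
  rfl

/-- Gaussian integration by parts (Stein's identity), along the `j`-th column of `B`. -/
theorem gaussianIntegral_X_mul (hB : B.PosDef) (j : Fin m) (p : MvPolynomial (Fin m) ℂ) :
    gaussianIntegral hB (X j * p) = gaussianIntegral hB (∑ i, B i j • pderiv i p) := by
  have fderiv_weight (x : Fin m → ℝ) : fderiv ℝ (gaussianWeight B) x (B.col j) • evalR p x =
      -(gaussianWeight B x • evalR (X j * p) x) := by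
    rw [fderiv_gaussianWeight_col (Matrix.isHermitian_iff_isSymm.1 hB.isHermitian) hB.isUnit]
    rw [evalR_mul, evalR_X, Complex.real_smul, Complex.real_smul]
    push_cast
    ring
  have fderiv_poly (x : Fin m → ℝ) :
      fderiv ℝ (evalR p) x (B.col j) = evalR (∑ i, B i j • pderiv i p) x :=
    fderiv_evalR_apply p x _
  have by_parts := integral_smul_fderiv_eq_neg_fderiv_smul_of_integrable (μ := volume) (𝕜 := ℝ)
    (f := gaussianWeight B) (g := evalR p) (v := B.col j)
    (by simpa only [fderiv_weight] using! (integrable_gaussianWeight_smul_evalR hB (X j * p)).neg)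
    (by simpa only [fderiv_poly] using integrable_gaussianWeight_smul_evalR hB _)
    (integrable_gaussianWeight_smul_evalR hB p)
    (fun x _ => differentiable_gaussianWeight B x)
    (fun x _ => (hasFDerivAt_evalR p x).differentiableAt)
  simp only [fderiv_weight, fderiv_poly, integral_neg, neg_neg] at by_parts
  exact by_parts.symm

end GaussianIntegral

section Bform

variable {m k : ℕ} {p q : MvPolynomial (Fin m) ℂ}

theorem conj_evalR_mul_evalR (p q : MvPolynomial (Fin m) ℂ) :
    (fun x => conj (evalR p x) * evalR q x) = evalR (MvPolynomial.map (starRingEnd ℂ) p * q) := by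
  ext x
  rw [evalR_mul, evalR_map_conj]

theorem Bform_eq_evalR (B : Matrix (Fin m) (Fin m) ℝ) (k : ℕ) (p q : MvPolynomial (Fin m) ℂ) :
    Bform B k p q = evalR ((quadDiffOp B ^ k) (MvPolynomial.map (starRingEnd ℂ) p * q)) 0 := by
  rw [Bform, conj_evalR_mul_evalR, iterate_QB_evalR]

theorem quadDiffOp_pow_map_conj_mul (B : Matrix (Fin m) (Fin m) ℝ) (hp : p.IsHomogeneous k)
    (hq : q.IsHomogeneous k) :
    (quadDiffOp B ^ k) (MvPolynomial.map (starRingEnd ℂ) p * q) = C (Bform B k p q) := by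
  have hdeg := isHomogeneous_quadDiffOp_pow B k ((hp.map (starRingEnd ℂ)).mul hq)
  rw [← two_mul, Nat.sub_self, ← totalDegree_zero_iff_isHomogeneous,
    totalDegree_eq_zero_iff_eq_C] at hdeg
  obtain ⟨c, hc⟩ : ∃ c, (quadDiffOp B ^ k) (MvPolynomial.map (starRingEnd ℂ) p * q) = C c :=
    ⟨_, hdeg⟩
  rw [Bform_eq_evalR, hc, evalR_C]

theorem Bform_conj_symm (B : Matrix (Fin m) (Fin m) ℝ) (k : ℕ) (p q : MvPolynomial (Fin m) ℂ) :
    Bform B k q p = conj (Bform B k p q) := by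
  have QB_pow_conj : (QB B)^[k] (fun x => conj (conj (evalR p x) * evalR q x)) =
      fun x => conj ((QB B)^[k] (fun x => conj (evalR p x) * evalR q x) x) :=
    (Function.Semiconj.iterate_right (f := fun f x => conj (f x))
      (fun f => (QB_conj B f).symm) k _).symm
  simpa [mul_comm, Bform] using congrFun QB_pow_conj 0

theorem integral_gaussianWeight_mul_Bform {B : Matrix (Fin m) (Fin m) ℝ} (hB : B.PosDef)
    (hp : p.IsHomogeneous k) (hq : q.IsHomogeneous k) :
    (∫ x, gaussianWeight B x) • Bform B k p q =
      (2 * k)‼ • ∫ x, gaussianWeight B x • (conj (evalR p x) * evalR q x) := by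
  have hpq : (MvPolynomial.map (starRingEnd ℂ) p * q).IsHomogeneous (2 * k) :=
    two_mul k ▸ (hp.map _).mul hq
  have hmoment := doubleFactorial_nsmul_eq_map_quadDiffOp_pow B (gaussianIntegral hB)
    (gaussianIntegral_X_mul hB) hpq
  rw [quadDiffOp_pow_map_conj_mul B hp hq] at hmoment
  simp only [gaussianIntegral_apply, evalR_mul, evalR_map_conj] at hmoment
  rw [hmoment]
  simp only [evalR_C, integral_smul_const]

theorem integral_gaussianWeight_mul_normSq_pos {B : Matrix (Fin m) (Fin m) ℝ} (hB : B.PosDef)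
    (hp : p ≠ 0) : 0 < ∫ x, gaussianWeight B x * Complex.normSq (evalR p x) := by
  obtain ⟨x, hx⟩ := exists_evalR_ne_zero hp
  refine integral_pos_of_integrable_nonneg_nonzero (x := x) ?_ ?_ ?_ ?_
  · exact (differentiable_gaussianWeight B).continuous.mul
      (Complex.continuous_normSq.comp (continuous_evalR p))
  · refine (integrable_gaussianWeight_smul_evalR hB
      (MvPolynomial.map (starRingEnd ℂ) p * p)).re.congr (.of_forall fun y => ?_)
    simp [evalR_mul, evalR_map_conj, Complex.normSq_apply]
  · exact fun y => mul_nonneg (gaussianWeight_pos B y).le (Complex.normSq_nonneg _)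
  · exact mul_ne_zero (gaussianWeight_pos B x).ne' (Complex.normSq_eq_zero.not.2 hx)

theorem Bform_self_pos {B : Matrix (Fin m) (Fin m) ℝ} (hB : B.PosDef) (hp : p.IsHomogeneous k)
    (hp0 : p ≠ 0) : 0 < Bform B k p p := by
  have mass_pos : 0 < ∫ x, gaussianWeight B x := by
    simpa [evalR] using
      integral_gaussianWeight_mul_normSq_pos hB (one_ne_zero (α := MvPolynomial (Fin m) ℂ))
  have moment_eq : ((∫ x, gaussianWeight B x : ℝ) : ℂ) * Bform B k p p =
      (2 * k)‼ • ((∫ x, gaussianWeight B x * Complex.normSq (evalR p x) : ℝ) : ℂ) := by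
    simpa only [← Complex.normSq_eq_conj_mul_self, Complex.real_smul, ← Complex.ofReal_mul,
      integral_complex_ofReal] using integral_gaussianWeight_mul_Bform hB hp hp
  have moment_pos := nsmul_pos
    (Complex.zero_lt_real.2 (integral_gaussianWeight_mul_normSq_pos hB hp0))
    (Nat.doubleFactorial_pos (2 * k)).ne'
  exact (pos_iff_pos_of_mul_pos (moment_eq ▸ moment_pos)).1 (Complex.zero_lt_real.2 mass_pos)

end Bform

/-- For `B` positive definite, `(p, q) ↦ Q^k(conj(p)q)` takes constant values on homogeneous
polynomials of degree `k` and defines a positive-definite Hermitian inner product on `ℋ^k_ℂ`. -/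
theorem stmt_3 (m k : ℕ) (B : Matrix (Fin m) (Fin m) ℝ) (hB : B.PosDef) :
    (∀ p q : MvPolynomial (Fin m) ℂ, p.IsHomogeneous k → q.IsHomogeneous k →
      ∀ x, (QB B)^[k] (fun y => (starRingEnd ℂ) (evalR p y) * evalR q y) x = Bform B k p q) ∧
    (∀ p q : MvPolynomial (Fin m) ℂ, p.IsHomogeneous k → q.IsHomogeneous k →
      Bform B k q p = (starRingEnd ℂ) (Bform B k p q)) ∧
    (∀ p q₁ q₂ : MvPolynomial (Fin m) ℂ, p.IsHomogeneous k → q₁.IsHomogeneous k →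
      q₂.IsHomogeneous k → Bform B k p (q₁ + q₂) = Bform B k p q₁ + Bform B k p q₂) ∧
    (∀ p q : MvPolynomial (Fin m) ℂ, p.IsHomogeneous k → q.IsHomogeneous k → ∀ c : ℂ,
      Bform B k p (c • q) = c * Bform B k p q) ∧
    (∀ p : MvPolynomial (Fin m) ℂ, p.IsHomogeneous k →
      0 ≤ (Bform B k p p).re ∧ (Bform B k p p).im = 0 ∧ (Bform B k p p = 0 ↔ p = 0)) := by
  refine ⟨fun p q hp hq x => ?_, fun p q _ _ => Bform_conj_symm B k p q, fun p q₁ q₂ _ _ _ => ?_,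
    fun p q _ _ c => ?_, fun p hp => ?_⟩
  · rw [conj_evalR_mul_evalR, iterate_QB_evalR, quadDiffOp_pow_map_conj_mul B hp hq, evalR_C]
  · simp only [Bform_eq_evalR, mul_add, map_add, evalR_add]
  · simp [Bform_eq_evalR, evalR]
  · obtain rfl | hp0 := eq_or_ne p 0
    · simp [Bform_eq_evalR, evalR]
    · have hpos := Bform_self_pos hB hp hp0
      obtain ⟨re_pos, im_eq⟩ := Complex.pos_iff.1 hpos
      exact ⟨re_pos.le, im_eq.symm, by simp [hpos.ne', hp0]⟩
end
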